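/- Averaged gentle measurement: let ρ_1,…,ρ_N be density matrices on ℂ^d and X_1,…,X_N Hermitian d×d matrices with 0 ≤ X_β ≤ 1 for each β, and suppose (1/N)·∑_{β=1}^N Re(trace(ρ_β X_β)) ≥ 1 − ε for some ε ≥ 0. Then (1/N)·∑_{β=1}^N ‖ρ_β − √X_β ρ_β √X_β‖₁ ≤ √(8ε). -/

import Mathlib

open scoped ComplexConjugate ComplexOrder MatrixOrder

/-- A density matrix: positive semidefinite with trace one. -/
def IsDensityMatrix {n : Type*} [Fintype n] (ρ : Matrix n n ℂ) : Prop :=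
  ρ.PosSemidef ∧ ρ.trace = 1

/-- The von Neumann entropy (in bits) of a (Hermitian) matrix:
`S(ρ) = −∑ᵢ λᵢ log₂ λᵢ` over the eigenvalues, with `0·log₂ 0 = 0`. -/
noncomputable def vnEntropy {n : Type*} [Fintype n] [DecidableEq n]
    (ρ : Matrix n n ℂ) : ℝ :=
  if h : ρ.IsHermitian then -∑ i, h.eigenvalues i * Real.logb 2 (h.eigenvalues i) else 0

/-- The trace norm of a Hermitian matrix: the sum of the absolute values of
its eigenvalues. -/
noncomputable def traceNorm {n : Type*} [Fintype n] [DecidableEq n]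
    (M : Matrix n n ℂ) : ℝ :=
  if h : M.IsHermitian then ∑ i, |h.eigenvalues i| else 0

section gentle_helpers
open scoped Matrix

lemma gm_sumsq {d : ℕ} (A : Matrix (Fin d) (Fin d) ℂ) :
    ∑ i, ∑ k, ‖A k i‖ ^ 2 = ((Aᴴ * A).trace).re := by
  simp only [Matrix.trace, Matrix.diag, Matrix.mul_apply, Matrix.conjTranspose_apply,
    Complex.re_sum]
  refine Finset.sum_congr rfl fun i _ => Finset.sum_congr rfl fun k _ => ?_
  rw [← Complex.normSq_eq_norm_sq, Complex.star_def, ← Complex.normSq_eq_conj_mul_self]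
  simp

lemma gm_abs (a b : ℂ) : |‖a‖ ^ 2 - ‖b‖ ^ 2| ≤ ‖a - b‖ * (‖a‖ + ‖b‖) := by
  rw [sq_sub_sq, abs_mul, abs_of_nonneg (by positivity : 0 ≤ ‖a‖ + ‖b‖), mul_comm]
  exact mul_le_mul_of_nonneg_right (abs_norm_sub_norm_le a b) (by positivity)

lemma gm_factor {d : ℕ} {ρ : Matrix (Fin d) (Fin d) ℂ} (hρ : ρ.PosSemidef) :
    ∃ B : Matrix (Fin d) (Fin d) ℂ, ρ = Bᴴ * B := by
  refine ⟨CFC.sqrt ρ, ?_⟩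
  have hS : (CFC.sqrt ρ).PosSemidef := Matrix.nonneg_iff_posSemidef.mp (CFC.sqrt_nonneg ρ)
  rw [hS.1.eq, CFC.sqrt_mul_sqrt_self ρ (Matrix.nonneg_iff_posSemidef.mpr hρ)]

lemma gm_trace_nonneg {d : ℕ} {ρ Y : Matrix (Fin d) (Fin d) ℂ}
    (hρ : ρ.PosSemidef) (hY : Y.PosSemidef) : 0 ≤ ((ρ * Y).trace).re := by
  obtain ⟨B, rfl⟩ := gm_factor hρ
  rw [Matrix.mul_assoc, Matrix.trace_mul_comm]
  have := (hY.mul_mul_conjTranspose_same B).trace_nonneg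
  exact (Complex.le_def.mp this).1

open scoped Matrix.Norms.L2Operator in
lemma gm_sqrt_le_one {d : ℕ} {X : Matrix (Fin d) (Fin d) ℂ}
    (hX1 : (1 - X).PosSemidef) : (1 - CFC.sqrt X).PosSemidef := by
  rw [← Matrix.le_iff] at hX1 ⊢
  have := CFC.sqrt_le_sqrt X 1 hX1
  rwa [CFC.sqrt_one] at this

lemma gm_single {d : ℕ} {ρ X : Matrix (Fin d) (Fin d) ℂ} (hρ : IsDensityMatrix ρ)
    (hX : X.PosSemidef) (hX1 : (1 - X).PosSemidef) :
    0 ≤ 1 - ((ρ * X).trace).re ∧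
    traceNorm (ρ - CFC.sqrt X * ρ * CFC.sqrt X) ^ 2 ≤ 4 * (1 - ((ρ * X).trace).re) := by
  obtain ⟨hρ, htr⟩ := hρ
  have hS1 := gm_sqrt_le_one hX1
  have hS : (CFC.sqrt X).PosSemidef := Matrix.nonneg_iff_posSemidef.mp (CFC.sqrt_nonneg X)
  have hSS : CFC.sqrt X * CFC.sqrt X = X :=
    CFC.sqrt_mul_sqrt_self X (Matrix.nonneg_iff_posSemidef.mpr hX)
  generalize CFC.sqrt X = S at *
  have ht := gm_trace_nonneg hρ hX1
  have hsX : (S - X).PosSemidef := by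
    have h1 := hS1.mul_mul_conjTranspose_same S
    have h2 := hS.mul_mul_conjTranspose_same (1 - S)
    rw [hS.1.eq] at h1
    rw [hS1.1.eq] at h2
    have h3 := h1.add h2
    have : S * (1 - S) * S + (1 - S) * S * (1 - S) = S - X := by
      rw [← hSS]; noncomm_ring
    rwa [this] at h3
  have hs := gm_trace_nonneg hρ hsX
  rw [Matrix.mul_sub, Matrix.trace_sub, Complex.sub_re] at ht hs
  rw [Matrix.mul_one, htr, Complex.one_re] at ht
  refine ⟨ht, ?_⟩
  obtain ⟨B, hB⟩ := gm_factor hρ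
  have hM : (ρ - S * ρ * S).IsHermitian := by
    have := (hρ.mul_mul_conjTranspose_same S).1
    rw [hS.1.eq] at this
    exact hρ.1.sub this
  rw [traceNorm, dif_pos hM]
  set U : Matrix (Fin d) (Fin d) ℂ := hM.eigenvectorUnitary.1 with hU
  have hUU : U * Uᴴ = 1 := Matrix.mem_unitaryGroup_iff.mp hM.eigenvectorUnitary.2
  have hUU' : Uᴴ * U = 1 := Matrix.mem_unitaryGroup_iff'.mp hM.eigenvectorUnitary.2
  have htrU : ∀ Y : Matrix (Fin d) (Fin d) ℂ, (Uᴴ * Y * U).trace = Y.trace := by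
    intro Y
    rw [Matrix.trace_mul_comm, ← Matrix.mul_assoc, hUU, Matrix.one_mul]
  have hD : Uᴴ * (ρ - S * ρ * S) * U = Matrix.diagonal (fun i => (hM.eigenvalues i : ℂ)) := by
    have := hM.spectral_theorem
    rw [Unitary.conjStarAlgAut_apply] at this
    conv_lhs => rw [this]
    change Uᴴ * (U * _ * Uᴴ) * U = _
    rw [Matrix.mul_assoc, Matrix.mul_assoc, Matrix.mul_assoc, hUU', ← Matrix.mul_assoc, hUU']
    simp [Function.comp_def]
  set A := B * U with hA
  set C := B * S * U with hC
  have hAA : Aᴴ * A = Uᴴ * ρ * U := by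
    rw [hA, hB, Matrix.conjTranspose_mul]; simp only [Matrix.mul_assoc]
  have hCC : Cᴴ * C = Uᴴ * (S * ρ * S) * U := by
    rw [hC, hB, Matrix.conjTranspose_mul, Matrix.conjTranspose_mul, hS.1.eq]
    simp only [Matrix.mul_assoc]
  have hAC : (A - C)ᴴ * (A - C) = Uᴴ * ((1 - S) * ρ * (1 - S)) * U := by
    have : A - C = B * (1 - S) * U := by rw [hA, hC]; noncomm_ring
    rw [this, hB, Matrix.conjTranspose_mul, Matrix.conjTranspose_mul, hS1.1.eq]
    simp only [Matrix.mul_assoc]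
  have hlam : ∀ i, hM.eigenvalues i = ∑ k, (‖A k i‖ ^ 2 - ‖C k i‖ ^ 2) := by
    intro i
    have h1 : Aᴴ * A - Cᴴ * C = Matrix.diagonal (fun i => (hM.eigenvalues i : ℂ)) := by
      rw [hAA, hCC, ← hD]; noncomm_ring
    have h2 := congrArg Complex.re (congrFun (congrFun h1 i) i)
    rw [Matrix.diagonal_apply_eq, Complex.ofReal_re] at h2
    rw [← h2]
    simp only [Matrix.sub_apply, Matrix.mul_apply, Matrix.conjTranspose_apply, Complex.sub_re,
      Complex.re_sum, Finset.sum_sub_distrib, Complex.star_def,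
      ← Complex.normSq_eq_conj_mul_self, Complex.ofReal_re, Complex.normSq_eq_norm_sq]
  have sA : ∑ i, ∑ k, ‖A k i‖ ^ 2 = 1 := by
    rw [gm_sumsq, hAA, htrU, htr, Complex.one_re]
  have tSS : (S * ρ * S).trace = (ρ * X).trace := by
    rw [Matrix.trace_mul_comm, ← Matrix.mul_assoc, hSS, Matrix.trace_mul_comm]
  have sC : ∑ i, ∑ k, ‖C k i‖ ^ 2 = ((ρ * X).trace).re := by
    rw [gm_sumsq, hCC, htrU, tSS]
  have sAC : ∑ i, ∑ k, ‖A k i - C k i‖ ^ 2 ≤ 1 - ((ρ * X).trace).re := by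
    have h0 := gm_sumsq (A - C)
    simp only [Matrix.sub_apply] at h0
    have h1 : (1 - S) * ρ * (1 - S) = ρ - S * ρ - ρ * S + S * ρ * S := by noncomm_ring
    rw [h0, hAC, htrU, h1, Matrix.trace_add, Matrix.trace_sub, Matrix.trace_sub, tSS,
      Matrix.trace_mul_comm S ρ, htr]
    simp only [Complex.add_re, Complex.sub_re, Complex.one_re]
    linarith
  have hle : ∑ i, |hM.eigenvalues i| ≤
      ∑ p : Fin d × Fin d, ‖A p.2 p.1 - C p.2 p.1‖ * (‖A p.2 p.1‖ + ‖C p.2 p.1‖) := by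
    rw [Fintype.sum_prod_type]
    refine Finset.sum_le_sum fun i _ => ?_
    rw [hlam i]
    exact (Finset.abs_sum_le_sum_abs _ _).trans (Finset.sum_le_sum fun k _ => gm_abs _ _)
  have hcs := Finset.sum_mul_sq_le_sq_mul_sq Finset.univ
    (fun p : Fin d × Fin d => ‖A p.2 p.1 - C p.2 p.1‖)
    (fun p : Fin d × Fin d => ‖A p.2 p.1‖ + ‖C p.2 p.1‖)
  have h4 : ∑ p : Fin d × Fin d, (‖A p.2 p.1‖ + ‖C p.2 p.1‖) ^ 2 ≤ 4 := by
    calc _ ≤ ∑ p : Fin d × Fin d, (2 * ‖A p.2 p.1‖ ^ 2 + 2 * ‖C p.2 p.1‖ ^ 2) :=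
          Finset.sum_le_sum fun p _ => by nlinarith [sq_nonneg (‖A p.2 p.1‖ - ‖C p.2 p.1‖)]
      _ = 2 * 1 + 2 * ((ρ * X).trace).re := by
          rw [Finset.sum_add_distrib, ← Finset.mul_sum, ← Finset.mul_sum, Fintype.sum_prod_type,
            Fintype.sum_prod_type, sA, sC]
      _ ≤ 4 := by linarith
  calc (∑ i, |hM.eigenvalues i|) ^ 2 ≤ _ :=
        pow_le_pow_left₀ (Finset.sum_nonneg fun i _ => abs_nonneg _) hle 2
    _ ≤ _ := hcs
    _ ≤ (1 - ((ρ * X).trace).re) * 4 := by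
        refine mul_le_mul ?_ h4 (Finset.sum_nonneg fun i _ => sq_nonneg _) ht
        rw [Fintype.sum_prod_type]; exact sAC
    _ = _ := mul_comm _ _

end gentle_helpers

/-- averaged gentle measurement. -/
theorem gentle_measurement_averaged {d N : ℕ}
    (ρ : Fin N → Matrix (Fin d) (Fin d) ℂ) (hρ : ∀ β, IsDensityMatrix (ρ β))
    (X : Fin N → Matrix (Fin d) (Fin d) ℂ)
    (hX : ∀ β, (X β).PosSemidef) (hX1 : ∀ β, (1 - X β).PosSemidef)
    (ε : ℝ) (hε : 0 ≤ ε)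
    (h : 1 - ε ≤ (N : ℝ)⁻¹ * ∑ β, ((ρ β * X β).trace).re) :
    (N : ℝ)⁻¹ * ∑ β, traceNorm (ρ β - CFC.sqrt (X β) * ρ β * CFC.sqrt (X β)) ≤
      Real.sqrt (8 * ε) := by
  rcases Nat.eq_zero_or_pos N with rfl | hN
  · simp
  have hN' : (0 : ℝ) < N := by exact_mod_cast hN
  apply Real.le_sqrt_of_sq_le
  have h1 := sq_sum_le_card_mul_sum_sq (s := Finset.univ)
    (f := fun β => traceNorm (ρ β - CFC.sqrt (X β) * ρ β * CFC.sqrt (X β)))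
  have h2 : ∑ β, traceNorm (ρ β - CFC.sqrt (X β) * ρ β * CFC.sqrt (X β)) ^ 2 ≤
      ∑ β, 4 * (1 - ((ρ β * X β).trace).re) :=
    Finset.sum_le_sum fun β _ => (gm_single (hρ β) (hX β) (hX1 β)).2
  rw [← Finset.mul_sum, Finset.sum_sub_distrib] at h2
  simp only [Finset.card_univ, Fintype.card_fin, Finset.sum_const, nsmul_eq_mul, mul_one] at h1 h2
  rw [inv_mul_eq_div, le_div_iff₀ hN'] at h
  rw [inv_mul_eq_div, div_pow, div_le_iff₀ (by positivity)]
  have h3 := mul_le_mul_of_nonneg_left h2 hN'.le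
  have h4 := mul_le_mul_of_nonneg_left h hN'.le
  have h5 : 0 ≤ ε * (N : ℝ) ^ 2 := by positivity
  nlinarith
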